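/- Let 1 ≤ q < ∞ and let b ∈ SV satisfy b(t²) ∼ b(t) on (0,∞), with associated functions B₀ and B∞. Assume there exist real numbers α < 0 < β such that u ↦ u^{−α}·B₀(u) is almost decreasing on (0,1] and u ↦ u^{−β}·B∞(u) is almost increasing on (0,1] (i.e. ρ_{B₀} < 0 < π_{B∞}). Then there is a constant C > 0 such that for every non-negative measurable function f on (0,∞): (∫₀^∞ (b(t)·∫₀^t f(s) ds)^q dt/(t·ℓ(t)))^{1/q} ≤ C·(∫₀^∞ (t·b(t)·f(t)·ℓ(t))^q dt/(t·ℓ(t)))^{1/q}. -/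

import Mathlib

open Set MeasureTheory Real

/-- `f` is almost increasing on `S`: there is `C > 0` with `f s ≤ C * f t` whenever `s ≤ t` in `S`. -/
def AlmostIncreasingOn (f : ℝ → ℝ) (S : Set ℝ) : Prop :=
  ∃ C > (0:ℝ), ∀ s ∈ S, ∀ t ∈ S, s ≤ t → f s ≤ C * f t

/-- `f` is almost decreasing on `S`: there is `C > 0` with `f t ≤ C * f s` whenever `s ≤ t` in `S`. -/
def AlmostDecreasingOn (f : ℝ → ℝ) (S : Set ℝ) : Prop :=
  ∃ C > (0:ℝ), ∀ s ∈ S, ∀ t ∈ S, s ≤ t → f t ≤ C * f s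

/-- A measurable positive function `b` on `(0,∞)` is slowly varying if for every `ε > 0`,
`t ↦ t^ε * b t` is almost increasing and `t ↦ t^(-ε) * b t` is almost decreasing on `(0,∞)`. -/
def SlowlyVarying (b : ℝ → ℝ) : Prop :=
  Measurable b ∧ (∀ t ∈ Ioi (0:ℝ), 0 < b t) ∧
  ∀ ε > (0:ℝ), AlmostIncreasingOn (fun t => t ^ ε * b t) (Ioi 0) ∧
    AlmostDecreasingOn (fun t => t ^ (-ε) * b t) (Ioi 0)

/-- `f ∼ g` on `S`: there are `c, C > 0` with `c * g x ≤ f x ≤ C * g x` for all `x ∈ S`. -/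
def EquivOn (f g : ℝ → ℝ) (S : Set ℝ) : Prop :=
  ∃ c > (0:ℝ), ∃ C > (0:ℝ), ∀ x ∈ S, c * g x ≤ f x ∧ f x ≤ C * g x

/-- The associated function `B₀(u) = b(e^{1 - 1/u})`. -/
noncomputable def assocB0 (b : ℝ → ℝ) (u : ℝ) : ℝ := b (Real.exp (1 - 1 / u))

/-- The associated function `B∞(u) = b(e^{1/u - 1})`. -/
noncomputable def assocBinf (b : ℝ → ℝ) (u : ℝ) : ℝ := b (Real.exp (1 / u - 1))

/-- `ℓ(t) = 1 + |log t|`. -/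
noncomputable def ell (t : ℝ) : ℝ := 1 + |Real.log t|

/-- The sequence `λ_k`: `λ_k = e^{1 - e^{-k}}` for `k ≤ -1` and `λ_k = e^{e^k - 1}` for `k ≥ 0`. -/
noncomputable def lam (k : ℤ) : ℝ :=
  if k < 0 then Real.exp (1 - Real.exp (-(k : ℝ))) else Real.exp (Real.exp (k : ℝ) - 1)

/-!
The substitution `v = sign (log t) * log (ell t)` turns `dt / (t * ell t)` on `(0, ∞)` into
Lebesgue measure on `ℝ`. Since `e^v` is the variable of `B₀` when `t ≤ 1` and `e^{-v}` is that of
`B∞` when `t ≥ 1`, the two index conditions together say that `b` decays exponentially in `v`: for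
`γ = min (-α) β`, `e^{γv} b` is almost decreasing on the whole line. Writing `w` for the scale
coordinate of `s`, the factor `b t` can therefore be moved inside the integral as
`e^{-γ(v - w)} b s`, which bounds the left-hand side by the convolution of `s b(s) f(s) ell(s)`
with an integrable kernel, a multiple of the exponential density. Young's inequality concludes.
-/

open ProbabilityTheory
open scoped ENNReal

namespace AlmostDecreasingOn

variable {f g V w b : ℝ → ℝ} {S T : Set ℝ}

lemma congr (hf : AlmostDecreasingOn f S) (h : EqOn f g S) : AlmostDecreasingOn g S := by
  obtain ⟨C, hC, hle⟩ := hf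
  refine ⟨C, hC, fun s hs t ht hst => ?_⟩
  rw [← h hs, ← h ht]
  exact hle s hs t ht hst

lemma comp_monotoneOn (hf : AlmostDecreasingOn f T) (hg : MonotoneOn g S) (hmaps : MapsTo g S T) :
    AlmostDecreasingOn (fun t => f (g t)) S := by
  obtain ⟨C, hC, hle⟩ := hf
  exact ⟨C, hC, fun s hs t ht hst => hle _ (hmaps hs) _ (hmaps ht) (hg hs ht hst)⟩

lemma antitoneOn_mul (hf : AlmostDecreasingOn f S) (hf₀ : ∀ t ∈ S, 0 ≤ f t)
    (hw : AntitoneOn w S) (hw₀ : ∀ t ∈ S, 0 ≤ w t) :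
    AlmostDecreasingOn (fun t => w t * f t) S := by
  obtain ⟨C, hC, hle⟩ := hf
  refine ⟨C, hC, fun s hs t ht hst => ?_⟩
  calc w t * f t ≤ w t * (C * f s) := mul_le_mul_of_nonneg_left (hle s hs t ht hst) (hw₀ t ht)
    _ ≤ w s * (C * f s) := mul_le_mul_of_nonneg_right (hw hs ht hst) (mul_nonneg hC.le (hf₀ s hs))
    _ = C * (w s * f s) := mul_left_comm _ _ _

lemma exp_mul_of_le {γ δ : ℝ} (h : AlmostDecreasingOn (fun t => exp (δ * V t) * b t) S)
    (hγδ : γ ≤ δ) (hV : MonotoneOn V S) (hb : ∀ t ∈ S, 0 ≤ b t) :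
    AlmostDecreasingOn (fun t => exp (γ * V t) * b t) S := by
  have hanti : AntitoneOn (fun t => exp ((γ - δ) * V t)) S := fun s hs t ht hst =>
    exp_le_exp.2 (mul_le_mul_of_nonpos_left (hV hs ht hst) (sub_nonpos.2 hγδ))
  refine (h.antitoneOn_mul (fun t ht => mul_nonneg (exp_pos _).le (hb t ht)) hanti
    fun t _ => (exp_pos _).le).congr fun t _ => ?_
  simp only [← mul_assoc, ← exp_add, ← add_mul, sub_add_cancel]

lemma union_right {c : ℝ} (hS : AlmostDecreasingOn f S) (hT : AlmostDecreasingOn f T)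
    (hSc : IsGreatest S c) (hTc : IsLeast T c) (hf : ∀ t ∈ S ∪ T, 0 ≤ f t) :
    AlmostDecreasingOn f (S ∪ T) := by
  obtain ⟨A, hA, hleA⟩ := hS
  obtain ⟨B, hB, hleB⟩ := hT
  refine ⟨A + B + B * A, by positivity, fun s hs t ht hst => ?_⟩
  have hAs : 0 ≤ A * f s := mul_nonneg hA.le (hf s hs)
  have hBs : 0 ≤ B * f s := mul_nonneg hB.le (hf s hs)
  have hBAs : 0 ≤ B * (A * f s) := mul_nonneg hB.le hAs
  have le_of_mem_left (hs : s ∈ S) (ht : t ∈ S) : f t ≤ (A + B + B * A) * f s := by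
    linarith [hleA s hs t ht hst]
  rcases hs with hs | hs <;> rcases ht with ht | ht
  · exact le_of_mem_left hs ht
  · have hsc : f c ≤ A * f s := hleA s hs c hSc.1 (hSc.2 hs)
    have hct : f t ≤ B * f c := hleB c hTc.1 t ht (hTc.2 ht)
    linarith [mul_le_mul_of_nonneg_left hsc hB.le]
  · have hs_eq : s = c := le_antisymm (hst.trans (hSc.2 ht)) (hTc.2 hs)
    exact le_of_mem_left (hs_eq ▸ hSc.1) ht
  · linarith [hleB s hs t ht hst]

end AlmostDecreasingOn

lemma AlmostIncreasingOn.comp_antitoneOn {f g : ℝ → ℝ} {S T : Set ℝ}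
    (hf : AlmostIncreasingOn f T) (hg : AntitoneOn g S) (hmaps : MapsTo g S T) :
    AlmostDecreasingOn (fun t => f (g t)) S := by
  obtain ⟨C, hC, hle⟩ := hf
  exact ⟨C, hC, fun s hs t ht hst => hle _ (hmaps ht) _ (hmaps hs) (hg hs ht hst)⟩

section Schur

variable {X Y : Type*} [MeasurableSpace X] [MeasurableSpace Y] {μ : Measure X} {ν : Measure Y}
  {q : ℝ}

lemma rpow_lintegral_mul_le (hq : 1 ≤ q) {k g : X → ℝ≥0∞} (hk : Measurable k)
    (hg : Measurable g) :
    (∫⁻ x, k x * g x ∂μ) ^ q ≤ (∫⁻ x, k x ∂μ) ^ (q - 1) * ∫⁻ x, k x * g x ^ q ∂μ := by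
  have hq₀ : 0 < q := one_pos.trans_le hq
  have h := eLpNorm'_le_eLpNorm'_mul_rpow_measure_univ (μ := μ.withDensity k) (f := g)
    one_pos hq hg.aestronglyMeasurable
  simp only [eLpNorm', enorm_eq_self, ENNReal.rpow_one, div_one,
    withDensity_apply _ MeasurableSet.univ, Measure.restrict_univ,
    lintegral_withDensity_eq_lintegral_mul _ hk hg,
    lintegral_withDensity_eq_lintegral_mul _ hk (hg.pow_const q), Pi.mul_apply] at h
  calc (∫⁻ x, k x * g x ∂μ) ^ q
      ≤ ((∫⁻ x, k x * g x ^ q ∂μ) ^ (1 / q) * (∫⁻ x, k x ∂μ) ^ (1 - 1 / q)) ^ q :=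
        ENNReal.rpow_le_rpow h hq₀.le
    _ = (∫⁻ x, k x ∂μ) ^ (q - 1) * ∫⁻ x, k x * g x ^ q ∂μ := by
        rw [ENNReal.mul_rpow_of_nonneg _ _ hq₀.le, ← ENNReal.rpow_mul, ← ENNReal.rpow_mul,
          one_div_mul_cancel hq₀.ne', ENNReal.rpow_one, sub_mul, one_div_mul_cancel hq₀.ne',
          one_mul, mul_comm]

/-- **Schur test**. -/
lemma lintegral_rpow_lintegral_mul_le [SFinite μ] [SFinite ν] (hq : 1 ≤ q) {k : X → Y → ℝ≥0∞}
    (hk : Measurable (Function.uncurry k)) {A B : ℝ≥0∞} (hrow : ∀ x, ∫⁻ y, k x y ∂ν ≤ A)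
    (hcol : ∀ y, ∫⁻ x, k x y ∂μ ≤ B) {g : Y → ℝ≥0∞} (hg : Measurable g) :
    ∫⁻ x, (∫⁻ y, k x y * g y ∂ν) ^ q ∂μ ≤ A ^ (q - 1) * B * ∫⁻ y, g y ^ q ∂ν := by
  have hkg : Measurable (Function.uncurry fun x y => k x y * g y ^ q) :=
    hk.mul ((hg.pow_const q).comp measurable_snd)
  calc ∫⁻ x, (∫⁻ y, k x y * g y ∂ν) ^ q ∂μ
      ≤ ∫⁻ x, A ^ (q - 1) * ∫⁻ y, k x y * g y ^ q ∂ν ∂μ := lintegral_mono fun x =>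
        (rpow_lintegral_mul_le hq hk.of_uncurry_left hg).trans <|
          mul_le_mul_left (ENNReal.rpow_le_rpow (hrow x) (sub_nonneg.2 hq)) _
    _ = A ^ (q - 1) * ∫⁻ y, (∫⁻ x, k x y ∂μ) * g y ^ q ∂ν := by
        rw [lintegral_const_mul _ hkg.lintegral_prod_right,
          lintegral_lintegral_swap hkg.aemeasurable]
        simp only [lintegral_mul_const _ hk.of_uncurry_right]
    _ ≤ A ^ (q - 1) * ∫⁻ y, B * g y ^ q ∂ν := by
        gcongr with y
        exact hcol y
    _ = A ^ (q - 1) * B * ∫⁻ y, g y ^ q ∂ν := by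
        rw [lintegral_const_mul _ (hg.pow_const q), mul_assoc]

/-- Young's inequality `‖φ * g‖_q ≤ ‖φ‖₁ ‖g‖_q` pulled back along `V`. -/
lemma lintegral_rpow_lintegral_comp_sub_mul_le [SFinite μ] {G : Type*} [MeasurableSpace G]
    [AddGroup G] [MeasurableAdd G] [MeasurableNeg G] [MeasurableSub₂ G] {ν : Measure G}
    [ν.IsAddLeftInvariant] [ν.IsAddRightInvariant] [ν.IsNegInvariant] {V : X → G}
    (hV : Measurable V) (hμ : μ.map V ≤ ν) (hq : 1 ≤ q) {φ : G → ℝ≥0∞} (hφ : Measurable φ)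
    {g : X → ℝ≥0∞} (hg : Measurable g) :
    ∫⁻ t, (∫⁻ s, φ (V t - V s) * g s ∂μ) ^ q ∂μ ≤ (∫⁻ v, φ v ∂ν) ^ q * ∫⁻ s, g s ^ q ∂μ := by
  have lintegral_comp_le {ψ : G → ℝ≥0∞} (hψ : Measurable ψ) :
      ∫⁻ x, ψ (V x) ∂μ ≤ ∫⁻ v, ψ v ∂ν :=
    (lintegral_map hψ hV).symm.trans_le (lintegral_mono' hμ le_rfl)
  have hrow (t : X) : ∫⁻ s, φ (V t - V s) ∂μ ≤ ∫⁻ v, φ v ∂ν :=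
    (lintegral_comp_le (hφ.comp (measurable_id.const_sub (V t)))).trans_eq
      (lintegral_sub_left_eq_self φ (V t))
  have hcol (s : X) : ∫⁻ t, φ (V t - V s) ∂μ ≤ ∫⁻ v, φ v ∂ν :=
    (lintegral_comp_le (hφ.comp (measurable_id.sub_const (V s)))).trans_eq
      (lintegral_sub_right_eq_self φ (V s))
  have hk : Measurable (Function.uncurry fun t s => φ (V t - V s)) :=
    hφ.comp ((hV.comp measurable_fst).sub (hV.comp measurable_snd))
  refine (lintegral_rpow_lintegral_mul_le hq hk hrow hcol hg).trans_eq ?_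
  have hpow (a : ℝ≥0∞) : a ^ (q - 1) * a = a ^ q := by
    simpa only [ENNReal.rpow_one, sub_add_cancel] using
      (ENNReal.rpow_add_of_nonneg (x := a) _ _ (sub_nonneg.2 hq) zero_le_one).symm
  rw [hpow]

end Schur

section Hardy

variable {μ : Measure ℝ} {S : Set ℝ} {V b : ℝ → ℝ} {γ : ℝ}

lemma ofReal_mul_setLIntegral_Iio_le {C : ℝ} (hS : ∀ᵐ s ∂μ, s ∈ S) (hV : MonotoneOn V S)
    (hγ : 0 < γ) (hC : 0 ≤ C)
    (hb : ∀ s ∈ S, ∀ t ∈ S, s ≤ t → exp (γ * V t) * b t ≤ C * (exp (γ * V s) * b s))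
    (g : ℝ → ℝ≥0∞) {t : ℝ} (ht : t ∈ S) :
    ENNReal.ofReal (b t) * ∫⁻ s in Iio t, g s ∂μ ≤ ENNReal.ofReal (C / γ) *
      ∫⁻ s, exponentialPDF γ (V t - V s) * (ENNReal.ofReal (b s) * g s) ∂μ := by
  have hkernel {s : ℝ} (hs : s ∈ S) (hst : s < t) : ENNReal.ofReal (b t) ≤
      ENNReal.ofReal (C / γ) * (exponentialPDF γ (V t - V s) * ENNReal.ofReal (b s)) := by
    rw [exponentialPDF_of_nonneg (sub_nonneg.2 (hV hs ht hst.le)),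
      ← ENNReal.ofReal_mul (by positivity), ← ENNReal.ofReal_mul (by positivity)]
    refine ENNReal.ofReal_le_ofReal ?_
    calc b t = exp (-(γ * V t)) * (exp (γ * V t) * b t) := by
          rw [← mul_assoc, ← exp_add, neg_add_cancel, exp_zero, one_mul]
      _ ≤ exp (-(γ * V t)) * (C * (exp (γ * V s) * b s)) :=
          mul_le_mul_of_nonneg_left (hb s hs t ht hst.le) (exp_pos _).le
      _ = C * exp (-(γ * (V t - V s))) * b s := by
          rw [mul_sub, neg_sub, sub_eq_neg_add, exp_add]; ring
      _ = C / γ * (γ * exp (-(γ * (V t - V s))) * b s) := by field_simp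
  rw [← lintegral_const_mul' _ _ ENNReal.ofReal_ne_top,
    ← lintegral_const_mul' _ _ ENNReal.ofReal_ne_top]
  refine (setLIntegral_mono_ae' measurableSet_Iio ?_).trans (setLIntegral_le_lintegral (Iio t) _)
  filter_upwards [hS] with s hs hst
  simpa only [mul_assoc] using mul_le_mul_left (hkernel hs hst) (g s)

lemma exists_lintegral_rpow_mul_setLIntegral_Iio_le [SFinite μ] (hS : ∀ᵐ s ∂μ, s ∈ S)
    (hVm : Measurable V) (hV : MonotoneOn V S) (hμ : μ.map V ≤ volume) {q : ℝ} (hq : 1 ≤ q)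
    (hγ : 0 < γ) (hbm : Measurable b)
    (hb : AlmostDecreasingOn (fun t => exp (γ * V t) * b t) S) :
    ∃ C > (0 : ℝ), ∀ g : ℝ → ℝ≥0∞, Measurable g →
      ∫⁻ t, (ENNReal.ofReal (b t) * ∫⁻ s in Iio t, g s ∂μ) ^ q ∂μ ≤
        ENNReal.ofReal C ^ q * ∫⁻ s, (ENNReal.ofReal (b s) * g s) ^ q ∂μ := by
  obtain ⟨C, hC, hle⟩ := hb
  have hq₀ : 0 ≤ q := zero_le_one.trans hq
  refine ⟨C / γ, by positivity, fun g hg => ?_⟩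
  calc ∫⁻ t, (ENNReal.ofReal (b t) * ∫⁻ s in Iio t, g s ∂μ) ^ q ∂μ
      ≤ ∫⁻ t, (ENNReal.ofReal (C / γ) *
          ∫⁻ s, exponentialPDF γ (V t - V s) * (ENNReal.ofReal (b s) * g s) ∂μ) ^ q ∂μ := by
        refine lintegral_mono_ae ?_
        filter_upwards [hS] with t ht
        exact ENNReal.rpow_le_rpow (ofReal_mul_setLIntegral_Iio_le hS hV hγ hC.le hle g ht) hq₀
    _ = ENNReal.ofReal (C / γ) ^ q *
          ∫⁻ t, (∫⁻ s, exponentialPDF γ (V t - V s) * (ENNReal.ofReal (b s) * g s) ∂μ) ^ q ∂μ := by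
        simp only [ENNReal.mul_rpow_of_nonneg _ _ hq₀]
        exact lintegral_const_mul' _ _ (ENNReal.rpow_ne_top_of_nonneg hq₀ ENNReal.ofReal_ne_top)
    _ ≤ ENNReal.ofReal (C / γ) ^ q * ∫⁻ s, (ENNReal.ofReal (b s) * g s) ^ q ∂μ := by
        refine mul_le_mul_right ?_ _
        have hφ : Measurable (exponentialPDF γ) := (measurable_exponentialPDFReal γ).ennreal_ofReal
        simpa only [lintegral_exponentialPDF_eq_one hγ, ENNReal.one_rpow, one_mul, Pi.mul_apply]
          using lintegral_rpow_lintegral_comp_sub_mul_le hVm hμ hq hφ (hbm.ennreal_ofReal.mul hg)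

end Hardy

lemma map_withDensity_abs_deriv_eq {S : Set ℝ} {V V' : ℝ → ℝ} (hS : NullMeasurableSet S)
    (hV : ∀ t ∈ S, HasDerivWithinAt V (V' t) S t) (hinj : InjOn V S) :
    ((volume.restrict S).withDensity fun t => ENNReal.ofReal |V' t|).map V =
      volume.restrict (V '' S) := by
  simpa only [ContinuousLinearMap.det_toSpanSingleton] using
    map_withDensity_abs_det_fderiv_eq_addHaar volume hS (fun t ht => (hV t ht).hasFDerivWithinAt)
      hinj

/-- The odd function `y ↦ sign y * log (1 + |y|)`, defined as a primitive so that it is visibly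
differentiable at `0`. -/
noncomputable def signedLog (y : ℝ) : ℝ := ∫ u in (0 : ℝ)..y, (1 + |u|)⁻¹

lemma continuous_inv_one_add_abs : Continuous fun u : ℝ => (1 + |u|)⁻¹ :=
  Continuous.inv₀ (by fun_prop) fun u => by positivity

lemma hasDerivAt_signedLog (y : ℝ) : HasDerivAt signedLog (1 + |y|)⁻¹ y :=
  (continuous_inv_one_add_abs.integral_hasStrictDerivAt 0 y).hasDerivAt

lemma strictMono_signedLog : StrictMono signedLog :=
  strictMono_of_hasDerivAt_pos hasDerivAt_signedLog fun y => by positivity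

lemma signedLog_neg (y : ℝ) : signedLog (-y) = -signedLog y := by
  have h := intervalIntegral.integral_comp_neg (a := 0) (b := y) fun u : ℝ => (1 + |u|)⁻¹
  simp only [abs_neg, neg_zero] at h
  rw [signedLog, signedLog, h, ← intervalIntegral.integral_symm]

lemma signedLog_of_nonneg {y : ℝ} (hy : 0 ≤ y) : signedLog y = log (1 + y) := by
  have hderiv : ∀ u ∈ uIcc 0 y, HasDerivAt (fun u => log (1 + u)) (1 + |u|)⁻¹ u := fun u hu => by
    have hu₀ : 0 ≤ u := (uIcc_of_le hy ▸ hu).1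
    simpa only [abs_of_nonneg hu₀, one_div, id] using
      ((hasDerivAt_id u).const_add 1).log (by simp only [id]; positivity)
  rw [signedLog, intervalIntegral.integral_eq_sub_of_hasDerivAt hderiv
    (continuous_inv_one_add_abs.intervalIntegrable _ _), add_zero, log_one, sub_zero]

/-- The primitive `t ↦ sign (log t) * log (ell t)` of `1 / (t * ell t)`, which straightens
`dt / (t * ell t)` into Lebesgue measure. -/
noncomputable def logScale (t : ℝ) : ℝ := signedLog (log t)

lemma ell_pos (t : ℝ) : 0 < ell t := by unfold ell; positivity

lemma measurable_ell : Measurable ell := by unfold ell; fun_prop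

lemma measurable_logScale : Measurable logScale :=
  strictMono_signedLog.monotone.measurable.comp measurable_log

lemma strictMonoOn_logScale : StrictMonoOn logScale (Ioi 0) :=
  strictMono_signedLog.comp_strictMonoOn strictMonoOn_log

lemma logScale_one : logScale 1 = 0 := by
  rw [logScale, log_one, signedLog_of_nonneg le_rfl, add_zero, log_one]

lemma hasDerivAt_logScale {t : ℝ} (ht : 0 < t) : HasDerivAt logScale (t * ell t)⁻¹ t := by
  rw [mul_inv_rev, ell]
  exact (hasDerivAt_signedLog (log t)).comp t (hasDerivAt_log ht.ne')

lemma exp_logScale {t : ℝ} (ht : 1 ≤ t) : exp (logScale t) = 1 + log t := by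
  have hlog : 0 ≤ log t := log_nonneg ht
  rw [logScale, signedLog_of_nonneg hlog, exp_log (by positivity)]

lemma logScale_inv (t : ℝ) : logScale t⁻¹ = -logScale t := by
  rw [logScale, log_inv, signedLog_neg, logScale]

lemma assocBinf_exp_neg_logScale (b : ℝ → ℝ) {t : ℝ} (ht : 1 ≤ t) :
    assocBinf b (exp (-logScale t)) = b t := by
  rw [assocBinf, exp_neg, one_div, inv_inv, exp_logScale ht, add_sub_cancel_left,
    exp_log (one_pos.trans_le ht)]

lemma assocB0_exp_logScale (b : ℝ → ℝ) {t : ℝ} (ht : t ∈ Ioc 0 1) :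
    assocB0 b (exp (logScale t)) = b t := by
  rw [assocB0, one_div, ← exp_neg, ← logScale_inv, exp_logScale (one_le_inv_iff₀.2 ht), log_inv,
    sub_add_cancel_left, neg_neg, exp_log ht.1]

section Weight

variable {b : ℝ → ℝ} {α β γ : ℝ}

lemma almostDecreasingOn_Ioc_exp_mul_logScale_mul
    (h : AlmostDecreasingOn (fun u => u ^ (-α) * assocB0 b u) (Ioc 0 1)) :
    AlmostDecreasingOn (fun t => exp (-α * logScale t) * b t) (Ioc 0 1) := by
  have hmono : MonotoneOn logScale (Ioc 0 1) :=
    strictMonoOn_logScale.monotoneOn.mono Ioc_subset_Ioi_self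
  have hmaps : MapsTo (fun t => exp (logScale t)) (Ioc 0 1) (Ioc 0 1) := fun t ht =>
    ⟨exp_pos _, exp_le_one_iff.2 <| logScale_one ▸ hmono ht (right_mem_Ioc.2 one_pos) ht.2⟩
  refine (h.comp_monotoneOn (exp_monotone.comp_monotoneOn hmono) hmaps).congr fun t ht => ?_
  simp only [Function.comp_apply, assocB0_exp_logScale b ht, ← exp_mul, mul_comm]

lemma almostDecreasingOn_Ici_exp_mul_logScale_mul
    (h : AlmostIncreasingOn (fun u => u ^ (-β) * assocBinf b u) (Ioc 0 1)) :
    AlmostDecreasingOn (fun t => exp (β * logScale t) * b t) (Ici 1) := by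
  have hmono : MonotoneOn logScale (Ici 1) :=
    strictMonoOn_logScale.monotoneOn.mono (Ici_subset_Ioi.2 one_pos)
  have hmaps : MapsTo (fun t => exp (-logScale t)) (Ici 1) (Ioc 0 1) := fun t ht =>
    ⟨exp_pos _, exp_le_one_iff.2 <| neg_nonpos.2 <| logScale_one ▸ hmono self_mem_Ici ht ht⟩
  refine (h.comp_antitoneOn (exp_monotone.comp_antitoneOn hmono.neg) hmaps).congr fun t ht => ?_
  simp only [Function.comp_apply, assocBinf_exp_neg_logScale b ht, ← exp_mul, neg_mul_neg,
    mul_comm]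

lemma almostDecreasingOn_Ioi_exp_mul_logScale_mul (hb : ∀ t > 0, 0 ≤ b t) (hγα : γ ≤ -α)
    (hγβ : γ ≤ β)
    (hB0 : AlmostDecreasingOn (fun u => u ^ (-α) * assocB0 b u) (Ioc 0 1))
    (hBinf : AlmostIncreasingOn (fun u => u ^ (-β) * assocBinf b u) (Ioc 0 1)) :
    AlmostDecreasingOn (fun t => exp (γ * logScale t) * b t) (Ioi 0) := by
  have hIoc : AlmostDecreasingOn (fun t => exp (γ * logScale t) * b t) (Ioc 0 1) :=
    (almostDecreasingOn_Ioc_exp_mul_logScale_mul hB0).exp_mul_of_le hγα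
      (strictMonoOn_logScale.monotoneOn.mono Ioc_subset_Ioi_self) fun t ht => hb t ht.1
  have hIci : AlmostDecreasingOn (fun t => exp (γ * logScale t) * b t) (Ici 1) :=
    (almostDecreasingOn_Ici_exp_mul_logScale_mul hBinf).exp_mul_of_le hγβ
      (strictMonoOn_logScale.monotoneOn.mono (Ici_subset_Ioi.2 one_pos))
      fun t ht => hb t (one_pos.trans_le ht)
  rw [← Ioc_union_Ici_eq_Ioi one_pos]
  refine hIoc.union_right hIci (isGreatest_Ioc one_pos) isLeast_Ici fun t ht => ?_
  rw [Ioc_union_Ici_eq_Ioi one_pos] at ht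
  exact mul_nonneg (exp_pos _).le (hb t ht)

end Weight

/-- The measure `dt / (t * ell t)` on `(0, ∞)`, with respect to which `L̂_q` is an `L_q` space. -/
noncomputable def logScaleMeasure : Measure ℝ :=
  (volume.restrict (Ioi 0)).withDensity fun t => ENNReal.ofReal (t * ell t)⁻¹

instance : SFinite logScaleMeasure := by unfold logScaleMeasure; infer_instance

lemma ae_logScaleMeasure_pos : ∀ᵐ t ∂logScaleMeasure, t ∈ Ioi (0 : ℝ) :=
  (withDensity_absolutelyContinuous _ _).ae_le (ae_restrict_mem measurableSet_Ioi)

lemma map_logScale_logScaleMeasure_le : logScaleMeasure.map logScale ≤ volume := by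
  have habs : logScaleMeasure =
      (volume.restrict (Ioi 0)).withDensity fun t => ENNReal.ofReal |(t * ell t)⁻¹| := by
    refine withDensity_congr_ae ?_
    filter_upwards [ae_restrict_mem measurableSet_Ioi] with t ht
    rw [abs_of_pos (inv_pos.2 (mul_pos ht (ell_pos t)))]
  rw [habs, map_withDensity_abs_deriv_eq measurableSet_Ioi.nullMeasurableSet
    (fun t ht => (hasDerivAt_logScale ht).hasDerivWithinAt) strictMonoOn_logScale.injOn]
  exact Measure.restrict_le_self

lemma setLIntegral_logScaleMeasure {A : Set ℝ} (hA : MeasurableSet A) (g : ℝ → ℝ≥0∞) :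
    ∫⁻ t in A, g t ∂logScaleMeasure =
      ∫⁻ t in A ∩ Ioi 0, g t / ENNReal.ofReal (t * ell t) := by
  have hdensity : Measurable fun t => ENNReal.ofReal (t * ell t)⁻¹ :=
    (measurable_id.mul measurable_ell).inv.ennreal_ofReal
  rw [logScaleMeasure, restrict_withDensity hA, Measure.restrict_restrict hA,
    lintegral_withDensity_eq_lintegral_mul_non_measurable _ hdensity
      (ae_of_all _ fun _ => ENNReal.ofReal_lt_top)]
  refine setLIntegral_congr_fun (hA.inter measurableSet_Ioi) fun t ht => ?_
  simp only [Pi.mul_apply, ENNReal.ofReal_inv_of_pos (mul_pos ht.2 (ell_pos t)),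
    ENNReal.div_eq_inv_mul]

lemma lintegral_logScaleMeasure (g : ℝ → ℝ≥0∞) :
    ∫⁻ t, g t ∂logScaleMeasure = ∫⁻ t in Ioi 0, g t / ENNReal.ofReal (t * ell t) := by
  simpa only [Measure.restrict_univ, univ_inter] using
    setLIntegral_logScaleMeasure MeasurableSet.univ g

lemma setLIntegral_Iio_logScaleMeasure (f : ℝ → ℝ≥0∞) (t : ℝ) :
    ∫⁻ s in Iio t, f s * ENNReal.ofReal (s * ell s) ∂logScaleMeasure = ∫⁻ s in Ioo 0 t, f s := by
  rw [setLIntegral_logScaleMeasure measurableSet_Iio, inter_comm, Ioi_inter_Iio]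
  refine setLIntegral_congr_fun measurableSet_Ioo fun s hs => ?_
  exact ENNReal.mul_div_cancel_right
    (ENNReal.ofReal_pos.2 (mul_pos hs.1 (ell_pos s))).ne' ENNReal.ofReal_ne_top

theorem limiting_hardy_inequality_i_general {q : ℝ} (hq : 1 ≤ q) {b : ℝ → ℝ} (hbm : Measurable b)
    (hb : ∀ t > 0, 0 ≤ b t) {α β : ℝ} (hα : α < 0) (hβ : 0 < β)
    (hB0 : AlmostDecreasingOn (fun u => u ^ (-α) * assocB0 b u) (Ioc 0 1))
    (hBinf : AlmostIncreasingOn (fun u => u ^ (-β) * assocBinf b u) (Ioc 0 1)) :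
    ∃ C > (0 : ℝ), ∀ f : ℝ → ℝ≥0∞, Measurable f →
      (∫⁻ t in Ioi (0 : ℝ), (ENNReal.ofReal (b t) * ∫⁻ s in Ioo (0 : ℝ) t, f s) ^ q
          / ENNReal.ofReal (t * ell t)) ^ (1 / q)
        ≤ ENNReal.ofReal C *
          (∫⁻ t in Ioi (0 : ℝ), (ENNReal.ofReal (t * b t * ell t) * f t) ^ q
            / ENNReal.ofReal (t * ell t)) ^ (1 / q) := by
  have hq₀ : 0 < q := one_pos.trans_le hq
  obtain ⟨C, hC, hardy⟩ := exists_lintegral_rpow_mul_setLIntegral_Iio_le ae_logScaleMeasure_pos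
    measurable_logScale strictMonoOn_logScale.monotoneOn map_logScale_logScaleMeasure_le hq
    (lt_min (neg_pos.2 hα) hβ) hbm
    (almostDecreasingOn_Ioi_exp_mul_logScale_mul hb (min_le_left _ _) (min_le_right _ _) hB0 hBinf)
  refine ⟨C, hC, fun f hf => ?_⟩
  have hweight : ∫⁻ t, (ENNReal.ofReal (b t) * (f t * ENNReal.ofReal (t * ell t))) ^ q
        ∂logScaleMeasure =
      ∫⁻ t, (ENNReal.ofReal (t * b t * ell t) * f t) ^ q ∂logScaleMeasure := by
    refine lintegral_congr_ae ?_
    filter_upwards [ae_logScaleMeasure_pos] with t ht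
    rw [mul_comm (f t), ← mul_assoc, ← ENNReal.ofReal_mul (hb t ht), mul_left_comm, mul_assoc t]
  rw [← lintegral_logScaleMeasure, ← lintegral_logScaleMeasure, one_div,
    ENNReal.rpow_inv_le_iff hq₀, ENNReal.mul_rpow_of_nonneg _ _ hq₀.le,
    ENNReal.rpow_inv_rpow hq₀.ne', ← hweight]
  simpa only [setLIntegral_Iio_logScaleMeasure] using
    hardy (fun t => f t * ENNReal.ofReal (t * ell t))
      (hf.mul (measurable_id.mul measurable_ell).ennreal_ofReal)

theorem limiting_hardy_inequality_i (q : ℝ) (hq : 1 ≤ q) (b : ℝ → ℝ)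
    (hb : SlowlyVarying b) (hsq : EquivOn (fun t => b (t ^ 2)) b (Ioi 0))
    (α β : ℝ) (hα : α < 0) (hβ : 0 < β)
    (hB0 : AlmostDecreasingOn (fun u => u ^ (-α) * assocB0 b u) (Ioc 0 1))
    (hBinf : AlmostIncreasingOn (fun u => u ^ (-β) * assocBinf b u) (Ioc 0 1)) :
    ∃ C > (0:ℝ), ∀ f : ℝ → ℝ, Measurable f → (∀ t, 0 ≤ f t) →
      (∫⁻ t in Ioi (0:ℝ),
          (ENNReal.ofReal (b t) * ∫⁻ s in Ioo (0:ℝ) t, ENNReal.ofReal (f s)) ^ q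
            / ENNReal.ofReal (t * ell t)) ^ (1 / q)
        ≤ ENNReal.ofReal C *
          (∫⁻ t in Ioi (0:ℝ),
            ENNReal.ofReal (t * b t * f t * ell t) ^ q
              / ENNReal.ofReal (t * ell t)) ^ (1 / q) := by
  obtain ⟨hbm, hb₀, -⟩ := hb
  obtain ⟨C, hC, h⟩ := limiting_hardy_inequality_i_general hq hbm (fun t ht => (hb₀ t ht).le)
    hα hβ hB0 hBinf
  refine ⟨C, hC, fun f hf hf₀ => ?_⟩
  simpa only [ENNReal.ofReal_mul' (hf₀ _), mul_right_comm _ (f _)] using h _ hf.ennreal_ofReal
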